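/- arXiv:1401.1407 — 2 statements merged into one kernel-verified Lean document; each statement's English description precedes it below -/
import Mathlib

section
/- Let K be an infinite field and n = 2m with m ≥ 1. The Zariski closure of the symplectic similitude group GSp_n(K) inside the space M_n(K) of all n×n matrices is exactly the set of all A ∈ M_n(K) such that AᵀJA = cJ = AJAᵀ for some c ∈ K (c allowed to be 0). That is, for A ∈ M_n(K): every polynomial in the matrix entries that vanishes identically on GSp_n(K) vanishes at A if and only if there exists c ∈ K with AᵀJA = cJ and AJAᵀ = cJ. -/
open Matrix

/-- The matrix `J` of the standard antisymmetric bilinear form on `K^(2m)`: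
with 1-based indices, `J i j = 1` if `i ≤ m` and `j = n + 1 - i`,
`J i j = -1` if `i > m` and `j = n + 1 - i`, and `0` otherwise
(here in 0-based `Fin (2*m)` indices). -/
def Jsymp (K : Type*) [Field K] (m : ℕ) : Matrix (Fin (2 * m)) (Fin (2 * m)) K :=
  Matrix.of fun i j =>
    if (i : ℕ) + (j : ℕ) + 1 = 2 * m then (if (i : ℕ) < m then 1 else -1) else 0

/-!
The multiplier of a similitude `B` is a polynomial in the entries of `B`, namely the quotient of an
entry of `BᵀJB` by the corresponding nonzero entry of `J`. Both `BᵀJB = cJ` and its consequence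
`BJ⁻¹Bᵀ = cJ⁻¹` are therefore polynomial conditions, and they persist on the closure.

Conversely, let `AᵀJA = 0 = AJ⁻¹Aᵀ`, and write `⟨x, y⟩ = xᵀJy`. The two equations say that the
images of `A` and of its adjoint are totally isotropic, so `A x = ∑ ⟨qᵢ, x⟩ wᵢ` with `q` and `w`
linearly independent and totally isotropic. By Witt's theorem some symplectic `G` maps each `qᵢ` to
`wᵢ`. Then `⟨A x, G y⟩ = ∑ ⟨qᵢ, x⟩⟨qᵢ, y⟩` is symmetric in `x` and `y`, so the mixed terms of
`⟨(A + tG) x, (A + tG) y⟩` cancel and `A + tG` has multiplier `t²`. A polynomial vanishing on the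
similitudes vanishes on this line for all `t ≠ 0`, hence, over an infinite field, also at `t = 0`.
-/

section BilinForm

open LinearMap (BilinForm transvection)
open LinearMap.BilinForm (apply_toDual_symm_apply)

section CommRing

variable {R V : Type*} [CommRing R] [AddCommGroup V] [Module R V] {B : BilinForm R V}

lemma isOrthogonal_comp {f g : V →ₗ[R] V} (hf : B.IsOrthogonal f) (hg : B.IsOrthogonal g) :
    B.IsOrthogonal (f ∘ₗ g) :=
  fun x y => (hf _ _).trans (hg x y)

lemma ker_eq_bot_of_isOrthogonal {g : V →ₗ[R] V} (hB : B.SeparatingLeft)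
    (hg : B.IsOrthogonal g) : g.ker = ⊥ :=
  LinearMap.ker_eq_bot'.mpr fun x hx => hB x fun y => by
    rw [← hg, hx, map_zero, LinearMap.zero_apply]

lemma isOrthogonal_transvection (hB : B.IsAlt) (a : R) (v : V) :
    B.IsOrthogonal (transvection (a • B v) v) := fun x y => by
  have hxv : B x v = -B v x := (hB.neg_eq v x).symm
  simp only [LinearMap.transvection.apply, map_add, map_smul, LinearMap.add_apply,
    LinearMap.smul_apply, smul_eq_mul, hB.self_eq_zero, hxv]
  ring

end CommRing

variable {K V : Type*} [Field K] [AddCommGroup V] [Module K V] {B : BilinForm K V}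

lemma exists_isOrthogonal_apply_eq_of_ne_zero (hB : B.IsAlt) {u w : V} (h : B w u ≠ 0) :
    ∃ g : V →ₗ[K] V, B.IsOrthogonal g ∧ g u = w ∧ ∀ x, B u x = 0 → B w x = 0 → g x = x := by
  refine ⟨transvection ((B w u)⁻¹ • B (w - u)) (w - u), isOrthogonal_transvection hB _ _, ?_, ?_⟩
  · simp [LinearMap.transvection.apply, hB.self_eq_zero, h]
  · intro x hux hwx
    simp [LinearMap.transvection.apply, hux, hwx]

lemma exists_isOrthogonal_apply_eq (hB : B.IsAlt) {u w z : V} (hzu : B z u ≠ 0)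
    (hzw : B z w ≠ 0) :
    ∃ g : V →ₗ[K] V, B.IsOrthogonal g ∧ g u = w ∧
      ∀ x, B u x = 0 → B z x = 0 → B w x = 0 → g x = x := by
  have hwz : B w z ≠ 0 := by rwa [← hB.neg_eq, neg_ne_zero]
  obtain ⟨g, hg, hgu, hg_fix⟩ := exists_isOrthogonal_apply_eq_of_ne_zero hB hzu
  obtain ⟨h, hh, hhz, hh_fix⟩ := exists_isOrthogonal_apply_eq_of_ne_zero hB hwz
  refine ⟨h ∘ₗ g, isOrthogonal_comp hh hg, by rw [LinearMap.comp_apply, hgu, hhz],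
    fun x hux hzx hwx => ?_⟩
  rw [LinearMap.comp_apply, hg_fix x hux hzx, hh_fix x hzx hwx]

variable [FiniteDimensional K V]

lemma exists_orthogonal_apply_ne_zero (hn : B.Nondegenerate) {p : Submodule K V} {x : V}
    (hx : x ∉ p) : ∃ z, (∀ v ∈ p, B z v = 0) ∧ B z x ≠ 0 := by
  obtain ⟨f, hfx, hfp⟩ := p.exists_le_ker_of_notMem hx
  exact ⟨(B.toDual hn).symm f, fun v hv => (apply_toDual_symm_apply f v).trans (hfp hv),
    by rwa [apply_toDual_symm_apply]⟩

lemma exists_orthogonal_apply_ne_zero_and_apply_ne_zero (hn : B.Nondegenerate)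
    {p : Submodule K V} {x y : V} (hx : x ∉ p) (hy : y ∉ p) :
    ∃ z, (∀ v ∈ p, B z v = 0) ∧ B z x ≠ 0 ∧ B z y ≠ 0 := by
  obtain ⟨z, hzp, hzx⟩ := exists_orthogonal_apply_ne_zero hn hx
  obtain ⟨z', hzp', hzy'⟩ := exists_orthogonal_apply_ne_zero hn hy
  by_cases hzy : B z y = 0
  · by_cases hzx' : B z' x = 0
    · exact ⟨z + z', fun v hv => by simp [hzp v hv, hzp' v hv], by simp [hzx, hzx'],
        by simp [hzy, hzy']⟩
    · exact ⟨z', hzp', hzx', hzy'⟩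
  · exact ⟨z, hzp, hzx, hzy⟩

-- Witt's extension theorem for totally isotropic subspaces of a symplectic space.
theorem exists_isOrthogonal_forall_apply_eq (hB : B.IsAlt) (hn : B.Nondegenerate) {r : ℕ}
    {u w : Fin r → V} (hu : LinearIndependent K u) (hw : LinearIndependent K w)
    (hu_iso : ∀ i j, B (u i) (u j) = 0) (hw_iso : ∀ i j, B (w i) (w j) = 0) :
    ∃ g : V →ₗ[K] V, B.IsOrthogonal g ∧ ∀ i, g (u i) = w i := by
  induction r with
  | zero => exact ⟨LinearMap.id, fun _ _ => rfl, fun i => i.elim0⟩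
  | succ r ih =>
    obtain ⟨g, hg, hgu⟩ := ih (linearIndependent_finSucc'.mp hu).1
      (linearIndependent_finSucc'.mp hw).1 (fun i j => hu_iso _ _) (fun i j => hw_iso _ _)
    have hgu_last : g (u (Fin.last r)) ∉ Submodule.span K (Set.range (Fin.init w)) := by
      have hgu_indep := hu.map' g (ker_eq_bot_of_isOrthogonal hn.1 hg)
      rw [← funext hgu]
      exact (linearIndependent_finSucc'.mp hgu_indep).2
    have hw_last : w (Fin.last r) ∉ Submodule.span K (Set.range (Fin.init w)) :=
      (linearIndependent_finSucc'.mp hw).2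
    obtain ⟨z, hz, hzu, hzw⟩ :=
      exists_orthogonal_apply_ne_zero_and_apply_ne_zero hn hgu_last hw_last
    obtain ⟨h, hh, hh_last, hh_fix⟩ := exists_isOrthogonal_apply_eq hB hzu hzw
    refine ⟨h ∘ₗ g, isOrthogonal_comp hh hg, Fin.lastCases hh_last fun i => ?_⟩
    have hgu_i : g (u i.castSucc) = w i.castSucc := hgu i
    rw [LinearMap.comp_apply, hgu_i]
    refine hh_fix _ ?_ (hz _ (Submodule.subset_span ⟨i, rfl⟩)) (hw_iso _ _)
    rw [← hgu_i, hg, hu_iso]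

lemma exists_forall_apply_eq_sum (hn : B.Nondegenerate) {A A' : V →ₗ[K] V}
    (hA : B.IsAdjointPair B A' A) :
    ∃ (r : ℕ) (q w : Fin r → V), LinearIndependent K q ∧ LinearIndependent K w ∧
      (∀ i, q i ∈ A'.range) ∧ (∀ i, w i ∈ A.range) ∧ ∀ x, A x = ∑ i, B (q i) x • w i := by
  let b := Module.finBasis K A.range
  choose f hf using fun i => (b.coord i).exists_extend
  let p : Fin (Module.finrank K A.range) → V := fun i => (B.toDual hn).symm (f i)
  have hp : ∀ i x, B (A' (p i)) x = b.repr (A.rangeRestrict x) i := fun i x => by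
    rw [hA, apply_toDual_symm_apply]
    exact LinearMap.congr_fun (hf i) (A.rangeRestrict x)
  choose x hx using fun i => A.surjective_rangeRestrict (b i)
  refine ⟨_, fun i => A' (p i), fun i => b i, ?_, ?_, fun i => ⟨p i, rfl⟩, fun i => (b i).2, ?_⟩
  · refine .of_pairwise_dual_eq_zero_one _ (fun i => B.flip (x i)) (fun i j hij => ?_) fun i => ?_
    · simp [hp, hx, hij]
    · simp [hp, hx]
  · exact b.linearIndependent.map' A.range.subtype A.range.ker_subtype
  · intro y
    have hy : A y = ↑(∑ i, b.repr (A.rangeRestrict y) i • b i) := by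
      rw [b.sum_repr]
      rfl
    simpa only [hp, Submodule.coe_sum, Submodule.coe_smul] using hy

theorem exists_comp_add_smul_eq_sq_smul (hB : B.IsAlt) (hn : B.Nondegenerate) {A A' : V →ₗ[K] V}
    (hA : B.IsAdjointPair B A' A) (hA'A : ∀ x, A' (A x) = 0) (hAA' : ∀ x, A (A' x) = 0) :
    ∃ g : V →ₗ[K] V, ∀ t : K, B.comp (A + t • g) (A + t • g) = t ^ 2 • B := by
  obtain ⟨r, q, w, hq, hw, hq_mem, hw_mem, hA_sum⟩ := exists_forall_apply_eq_sum hn hA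
  have hA_iso : ∀ x y, B (A x) (A y) = 0 := fun x y => by
    rw [← hA, hA'A, map_zero, LinearMap.zero_apply]
  have hq_iso : ∀ i j, B (q i) (q j) = 0 := fun i j => by
    obtain ⟨x, hx⟩ := hq_mem i
    obtain ⟨y, hy⟩ := hq_mem j
    rw [← hx, ← hy, hA, hAA', map_zero]
  have hw_iso : ∀ i j, B (w i) (w j) = 0 := fun i j => by
    obtain ⟨x, hx⟩ := hw_mem i
    obtain ⟨y, hy⟩ := hw_mem j
    rw [← hx, ← hy, hA_iso]
  obtain ⟨g, hg, hgq⟩ := exists_isOrthogonal_forall_apply_eq hB hn hq hw hq_iso hw_iso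
  have hAg : ∀ x y, B (A x) (g y) = ∑ i, B (q i) x * B (q i) y := fun x y => by
    simp [hA_sum, ← hgq, hg _ _]
  have hgA : ∀ x y, B (g x) (A y) = -B (A x) (g y) := fun x y => by
    rw [← hB.neg_eq, hAg, hAg]
    simp only [mul_comm]
  refine ⟨g, fun t => LinearMap.ext₂ fun x y => ?_⟩
  simp only [LinearMap.add_apply, LinearMap.smul_apply, map_add, map_smul, smul_eq_mul, hA_iso, hgA,
    hg x y, BilinForm.comp_apply]
  ring

end BilinForm

section ZariskiClosure

variable {m n R : Type*} [CommRing R]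

/-- Evaluation of polynomials in the entries of an `m × n` matrix at the matrix `A`. -/
abbrev evalEntries (A : Matrix m n R) : MvPolynomial (m × n) R →+* R :=
  MvPolynomial.eval fun p => A p.1 p.2

/-- The Zariski closure of a set `S` of matrices: the matrices at which every polynomial in the
entries that vanishes on `S` vanishes too. -/
def zariskiClosure (S : Set (Matrix m n R)) : Set (Matrix m n R) :=
  {A | ∀ f : MvPolynomial (m × n) R, (∀ B ∈ S, evalEntries B f = 0) → evalEntries A f = 0}

variable {S : Set (Matrix m n R)} {A : Matrix m n R}

lemma subset_zariskiClosure : S ⊆ zariskiClosure S := fun A hA _ hf => hf A hA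

lemma map_evalEntries_eq_of_mem_zariskiClosure {k l : Type*}
    {P Q : Matrix k l (MvPolynomial (m × n) R)}
    (hPQ : ∀ B ∈ S, P.map (evalEntries B) = Q.map (evalEntries B))
    (hA : A ∈ zariskiClosure S) : P.map (evalEntries A) = Q.map (evalEntries A) := by
  ext i j
  have h_sub := hA (P i j - Q i j) fun B hB => by
    rw [map_sub, sub_eq_zero]
    exact congr_fun₂ (hPQ B hB) i j
  rwa [map_sub, sub_eq_zero] at h_sub

lemma exists_polynomial_eval_eq_evalEntries (A G : Matrix m n R) (f : MvPolynomial (m × n) R) :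
    ∃ p : Polynomial R, ∀ t, p.eval t = evalEntries (A + t • G) f := by
  refine ⟨MvPolynomial.aeval
    (fun q => Polynomial.C (A q.1 q.2) + Polynomial.C (G q.1 q.2) * Polynomial.X) f, fun t => ?_⟩
  rw [← Polynomial.coe_aeval_eq_eval, ← AlgHom.comp_apply, MvPolynomial.comp_aeval]
  simp [evalEntries, MvPolynomial.aeval_eq_eval, mul_comm t]

lemma mem_zariskiClosure_of_infinite [IsDomain R] (G : Matrix m n R)
    (h : {t : R | A + t • G ∈ S}.Infinite) : A ∈ zariskiClosure S := by
  intro f hf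
  obtain ⟨p, hp⟩ := exists_polynomial_eval_eq_evalEntries A G f
  have hp_zero : p = 0 :=
    p.eq_zero_of_infinite_isRoot <| h.mono fun t ht => (hp t).trans (hf _ ht)
  simpa [hp_zero] using (hp 0).symm

lemma map_evalEntries_transpose_mul_mul [Fintype m] (M : Matrix m m R) (B : Matrix m n R) :
    ((mvPolynomialX m n R)ᵀ * M.map (MvPolynomial.C (σ := m × n)) * mvPolynomialX m n R).map
      (evalEntries B) = Bᵀ * M * B := by
  ext i j
  simp [mul_apply]

lemma map_evalEntries_mul_mul_transpose [Fintype n] (M : Matrix n n R) (B : Matrix m n R) :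
    (mvPolynomialX m n R * M.map (MvPolynomial.C (σ := m × n)) * (mvPolynomialX m n R)ᵀ).map
      (evalEntries B) = B * M * Bᵀ := by
  ext i j
  simp [mul_apply]

end ZariskiClosure

section AlternatingMatrices

variable {ι R : Type*} [Fintype ι] [DecidableEq ι] [CommRing R]

lemma transpose_eq_neg_of_isAlt {J : Matrix ι ι R} (hJ : (toBilin' J).IsAlt) : Jᵀ = -J := by
  ext i j
  simpa using (hJ.neg_eq (Pi.single i 1) (Pi.single j 1)).symm

lemma isAlt_toBilin'_sub_transpose (L : Matrix ι ι R) : (toBilin' (L - Lᵀ)).IsAlt := fun x => by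
  rw [toBilin'_apply', sub_mulVec, dotProduct_sub, mulVec_transpose, dotProduct_comm x (x ᵥ* L),
    dotProduct_mulVec, sub_self]

end AlternatingMatrices

section Similitudes

variable {ι K : Type*} [Fintype ι] [Field K]

/-- The matrices that multiply the bilinear form with Gram matrix `J` by a nonzero scalar. For
`J = Jsymp K m` this is the group `GSpₙ(K)`, `n = 2m`. -/
def similitudes (J : Matrix ι ι K) : Set (Matrix ι ι K) :=
  {B | ∃ c : K, c ≠ 0 ∧ Bᵀ * J * B = c • J}

variable [DecidableEq ι] {J A : Matrix ι ι K}

lemma mul_inv_mul_transpose_eq_smul_inv (hJ : IsUnit J.det) {c : K} (hc : c ≠ 0)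
    (hA : Aᵀ * J * A = c • J) : A * J⁻¹ * Aᵀ = c • J⁻¹ := by
  have h_left_inv : (c⁻¹ • (J⁻¹ * Aᵀ * J)) * A = 1 := by
    rw [Matrix.smul_mul, Matrix.mul_assoc, Matrix.mul_assoc, ← Matrix.mul_assoc Aᵀ, hA,
      Matrix.mul_smul, nonsing_inv_mul _ hJ, inv_smul_smul₀ hc]
  have h_right_inv : A * J⁻¹ * Aᵀ * J = c • 1 := by
    rw [← mul_eq_one_comm.mp h_left_inv, Matrix.mul_smul, smul_inv_smul₀ hc]
    simp only [Matrix.mul_assoc]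
  rw [← mul_nonsing_inv_cancel_right _ (A * J⁻¹ * Aᵀ) hJ, h_right_inv, Matrix.smul_mul,
    Matrix.one_mul]

lemma exists_multiplier_of_mem_zariskiClosure (hJ : IsUnit J.det)
    (hA : A ∈ zariskiClosure (similitudes J)) :
    ∃ c : K, Aᵀ * J * A = c • J ∧ A * J⁻¹ * Aᵀ = c • J⁻¹ := by
  cases isEmpty_or_nonempty ι
  · exact ⟨0, Subsingleton.elim _ _, Subsingleton.elim _ _⟩
  have hJ_ne : J ≠ 0 := by
    rintro rfl
    simp at hJ
  obtain ⟨i, j, hij⟩ : ∃ i j, J i j ≠ 0 := by simpa [← Matrix.ext_iff] using hJ_ne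
  let X := mvPolynomialX ι ι K
  let multiplier := (Xᵀ * J.map (MvPolynomial.C (σ := ι × ι)) * X) i j * MvPolynomial.C (J i j)⁻¹
  have eval_multiplier : ∀ (B : Matrix ι ι K),
      evalEntries B multiplier = (Bᵀ * J * B) i j * (J i j)⁻¹ := fun B => by
    rw [map_mul, MvPolynomial.eval_C, ← map_evalEntries_transpose_mul_mul J B, map_apply]
  have map_smul_C : ∀ (B M : Matrix ι ι K),
      (multiplier • M.map (MvPolynomial.C (σ := ι × ι))).map (evalEntries B) =
        evalEntries B multiplier • M :=
    fun B M => by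
      ext
      simp
  have eval_multiplier_of_eq : ∀ {B : Matrix ι ι K} {c : K}, Bᵀ * J * B = c • J →
      evalEntries B multiplier = c := fun {B c} hB => by
    rw [eval_multiplier, hB, Matrix.smul_apply, smul_eq_mul, mul_inv_cancel_right₀ hij]
  refine ⟨evalEntries A multiplier, ?_, ?_⟩
  · rw [← map_smul_C, ← map_evalEntries_transpose_mul_mul]
    refine map_evalEntries_eq_of_mem_zariskiClosure ?_ hA
    rintro B ⟨c, -, hB⟩
    rw [map_smul_C, map_evalEntries_transpose_mul_mul, eval_multiplier_of_eq hB, hB]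
  · rw [← map_smul_C, ← map_evalEntries_mul_mul_transpose]
    refine map_evalEntries_eq_of_mem_zariskiClosure ?_ hA
    rintro B ⟨c, hc, hB⟩
    rw [map_smul_C, map_evalEntries_mul_mul_transpose, eval_multiplier_of_eq hB,
      mul_inv_mul_transpose_eq_smul_inv hJ hc hB]

lemma exists_forall_transpose_mul_mul_add_smul_eq (hJ_alt : (toBilin' J).IsAlt)
    (hJ : IsUnit J.det) (hA : Aᵀ * J * A = 0) (hA' : A * J⁻¹ * Aᵀ = 0) :
    ∃ G : Matrix ι ι K, ∀ t : K, (A + t • G)ᵀ * J * (A + t • G) = t ^ 2 • J := by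
  have hJ_transpose : Jᵀ = -J := transpose_eq_neg_of_isAlt hJ_alt
  have h_adj : (toBilin' J).IsAdjointPair (toBilin' J) (toLin' (J⁻¹ * Aᵀ * J)) (toLin' A) := by
    refine (isAdjointPair_toLinearMap₂' J J _ _).mpr ?_
    have hJ_inv : (Jᵀ)⁻¹ = -J⁻¹ := inv_eq_right_inv <| by
      rw [hJ_transpose, neg_mul_neg, mul_nonsing_inv _ hJ]
    rw [Matrix.IsAdjointPair, transpose_mul, transpose_mul, transpose_transpose,
      transpose_nonsing_inv, hJ_inv, hJ_transpose, neg_mul, mul_neg, mul_neg, neg_neg,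
      ← Matrix.mul_assoc, nonsing_inv_mul_cancel_right _ _ hJ]
  obtain ⟨g, hg⟩ := exists_comp_add_smul_eq_sq_smul hJ_alt
    (LinearMap.BilinForm.nondegenerate_toBilin'_of_det_ne_zero' J hJ.ne_zero) h_adj
    (fun x => by simp [Matrix.mul_assoc, ← Matrix.mul_assoc Aᵀ, hA])
    (fun x => by simp [← Matrix.mul_assoc, hA'])
  refine ⟨LinearMap.toMatrix' g, fun t => toBilin'.injective ?_⟩
  rw [← toBilin'_comp, map_add, map_smul, toLin'_toMatrix', hg, map_smul]

end Similitudes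

section Jsymp

variable (K : Type*) [Field K] (m : ℕ)

lemma isAlt_toBilin'_Jsymp : (toBilin' (Jsymp K m)).IsAlt := by
  let L : Matrix (Fin (2 * m)) (Fin (2 * m)) K :=
    of fun i j => if (i : ℕ) + j + 1 = 2 * m ∧ (i : ℕ) < m then 1 else 0
  have hL : Jsymp K m = L - Lᵀ := by
    ext i j
    simp only [Jsymp, L, transpose_apply, of_apply, Matrix.sub_apply]
    split_ifs <;> first | omega | simp
  exact hL ▸ isAlt_toBilin'_sub_transpose L

lemma Jsymp_mul_self : Jsymp K m * Jsymp K m = -1 := by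
  ext i j
  rw [mul_apply, Finset.sum_eq_single i.rev]
  · simp only [Jsymp, of_apply, Fin.val_rev, Matrix.neg_apply, one_apply, Fin.ext_iff]
    split_ifs <;> first | omega | simp
  · intro k _ hk
    have hik : (i : ℕ) + k + 1 ≠ 2 * m := fun h => hk (by ext; rw [Fin.val_rev]; omega)
    simp [Jsymp, hik]
  · simp

lemma Jsymp_mul_neg_self : Jsymp K m * -Jsymp K m = 1 := by
  rw [Matrix.mul_neg, Jsymp_mul_self, neg_neg]

lemma isUnit_det_Jsymp : IsUnit (Jsymp K m).det :=
  isUnit_det_of_right_inverse (Jsymp_mul_neg_self K m)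

lemma Jsymp_inv : (Jsymp K m)⁻¹ = -Jsymp K m := inv_eq_right_inv (Jsymp_mul_neg_self K m)

end Jsymp

theorem zariski_closure_GSp_general {ι K : Type*} [Fintype ι] [DecidableEq ι] [Field K]
    [Infinite K] {J : Matrix ι ι K} (hJ_alt : (toBilin' J).IsAlt) (hJ : IsUnit J.det)
    (A : Matrix ι ι K) :
    A ∈ zariskiClosure (similitudes J) ↔
      ∃ c : K, Aᵀ * J * A = c • J ∧ A * J⁻¹ * Aᵀ = c • J⁻¹ := by
  refine ⟨exists_multiplier_of_mem_zariskiClosure hJ, ?_⟩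
  rintro ⟨c, hA, hA'⟩
  obtain rfl | hc := eq_or_ne c 0
  · rw [zero_smul] at hA hA'
    obtain ⟨G, hG⟩ := exists_forall_transpose_mul_mul_add_smul_eq hJ_alt hJ hA hA'
    refine mem_zariskiClosure_of_infinite G ?_
    exact (Set.finite_singleton (0 : K)).infinite_compl.mono fun t ht =>
      ⟨t ^ 2, pow_ne_zero 2 ht, hG t⟩
  · exact subset_zariskiClosure ⟨c, hc, hA⟩

/-- over an infinite field, the Zariski closure of the symplectic
similitude group `GSpₙ(K)` (`n = 2m`) in `Mₙ(K)` is exactly the set of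
matrices `A` with `AᵀJA = cJ = AJAᵀ` for some `c ∈ K`. -/
theorem zariski_closure_GSp (K : Type*) [Field K] [Infinite K]
    (m : ℕ) (hm : 1 ≤ m) (A : Matrix (Fin (2 * m)) (Fin (2 * m)) K) :
    (∀ f : MvPolynomial (Fin (2 * m) × Fin (2 * m)) K,
        (∀ B : Matrix (Fin (2 * m)) (Fin (2 * m)) K,
            (∃ c : K, c ≠ 0 ∧ Bᵀ * Jsymp K m * B = c • Jsymp K m) →
            MvPolynomial.eval (fun p => B p.1 p.2) f = 0) →
        MvPolynomial.eval (fun p => A p.1 p.2) f = 0)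
    ↔ ∃ c : K, Aᵀ * Jsymp K m * A = c • Jsymp K m ∧
        A * Jsymp K m * Aᵀ = c • Jsymp K m := by
  simpa only [Jsymp_inv, Matrix.mul_neg, Matrix.neg_mul, smul_neg, neg_inj] using!
    zariski_closure_GSp_general (isAlt_toBilin'_Jsymp K m) (isUnit_det_Jsymp K m) A
end

section
/- Let K be an algebraically closed field of characteristic ≠ 2 and n ≥ 1. Every matrix A in the orthogonal monoid S_O(n,K) can be written as A = g·e·h where g, h ∈ GO_n(K) and e is a diagonal idempotent matrix (a diagonal matrix with every diagonal entry equal to 0 or 1) that also lies in S_O(n,K). -/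
open Matrix

/-- The matrix `J` of the standard symmetric bilinear form: `J i j = 1` if
`i + j = n + 1` (with 1-based indices), and `0` otherwise. -/
def Jorth (K : Type*) [Field K] (n : ℕ) : Matrix (Fin n) (Fin n) K :=
  Matrix.of fun i j => if (i : ℕ) + (j : ℕ) + 1 = n then 1 else 0

/-!
If the multiplier `c` of `A` is nonzero, then `A` itself is a similitude. If `c = 0`, take a rank
factorization `A = P * Qᵀ`: the two conditions on `A` say exactly that the columns of `P` and those
of `Q` span totally isotropic subspaces. The first `r = rank A` standard basis vectors also span one
because `2 * r ≤ n`, so Witt's extension theorem moves them to the columns of `P` by an isometry `g`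
and to those of `Q` by an isometry `h`, and `A = g * diag(1, …, 1, 0, …, 0) * hᵀ`. Witt's
theorem for totally isotropic subspaces goes one basis vector at a time: two isotropic vectors that
are not orthogonal are swapped by a reflection, and two orthogonal ones are joined through a third
isotropic vector orthogonal to neither.
-/

open Module

section IsotropicVectors

variable {K V : Type*} [Field K] [AddCommGroup V] [Module K V] {B : LinearMap.BilinForm K V}

/-- The reflection in `v - w`, used to swap isotropic vectors `v` and `w` with `B v w ≠ 0`. For such
vectors `B (v - w) (v - w) = -2 * B v w`, so the usual coefficient of a reflection takes the form
below, which does not divide by `2`. -/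
noncomputable def isotropicSwap (B : LinearMap.BilinForm K V) (v w : V) : V →ₗ[K] V :=
  preReflection (v - w) (-(B v w)⁻¹ • B (v - w))

theorem isOrthogonal_isotropicSwap (hB : B.IsSymm) {v w : V} (hv : B v v = 0) (hw : B w w = 0)
    (hvw : B v w ≠ 0) : B.IsOrthogonal (isotropicSwap B v w) := by
  intro x y
  simp only [isotropicSwap, preReflection_apply, map_sub, map_smul, LinearMap.sub_apply,
    LinearMap.smul_apply, smul_eq_mul, hv, hw, hB.eq w v, hB.eq x v, hB.eq x w]
  field_simp
  ring

theorem isotropicSwap_apply_left (hB : B.IsSymm) {v w : V} (hv : B v v = 0) (hvw : B v w ≠ 0) :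
    isotropicSwap B v w v = w := by
  simp [isotropicSwap, preReflection_apply, hv, hB.eq w v, hvw]

theorem isotropicSwap_apply_of_apply_eq_zero {v w z : V} (hvz : B v z = 0) (hwz : B w z = 0) :
    isotropicSwap B v w z = z := by
  simp [isotropicSwap, preReflection_apply, hvz, hwz]

theorem exists_mem_apply_ne_zero_and_apply_ne_zero {R M N : Type*} [Semiring R] [AddCommMonoid M]
    [AddCommMonoid N] [Module R M] [Module R N] {W : Submodule R M} {f g : M →ₗ[R] N}
    (hf : ∃ x ∈ W, f x ≠ 0) (hg : ∃ x ∈ W, g x ≠ 0) : ∃ x ∈ W, f x ≠ 0 ∧ g x ≠ 0 := by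
  obtain ⟨x, hxW, hfx⟩ := hf
  obtain ⟨y, hyW, hgy⟩ := hg
  by_cases hgx : g x = 0
  · by_cases hfy : f y = 0
    · exact ⟨x + y, W.add_mem hxW hyW, by simpa [hfy] using hfx, by simpa [hgx] using hgy⟩
    · exact ⟨y, hyW, hfy, hgy⟩
  · exact ⟨x, hxW, hfx, hgx⟩

theorem exists_isotropic_mem_apply_ne_zero (h2 : (2 : K) ≠ 0) (hB : B.IsSymm) {W : Submodule K V}
    {v w : V} (hvW : v ∈ W) (hv : B v v = 0) (hvw : B v w = 0)
    (hv_ne : ∃ x ∈ W, B v x ≠ 0) (hw_ne : ∃ x ∈ W, B w x ≠ 0) :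
    ∃ u ∈ W, B u u = 0 ∧ B v u ≠ 0 ∧ B w u ≠ 0 := by
  obtain ⟨x, hxW, hvx, hwx⟩ := exists_mem_apply_ne_zero_and_apply_ne_zero hv_ne hw_ne
  -- Adding a multiple of `v` to `x` changes neither `B v x` nor `B w x`, but it can kill `B x x`.
  refine ⟨x - (B x x / (2 * B v x)) • v, W.sub_mem hxW (W.smul_mem _ hvW), ?_, ?_, ?_⟩
  · simp only [map_sub, map_smul, LinearMap.sub_apply, LinearMap.smul_apply, smul_eq_mul, hv,
      hB.eq x v]
    field_simp
    ring
  · simpa [hv] using hvx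
  · simpa [hB.eq w v, hvw] using hwx

theorem exists_isOrthogonal_apply_eq_and_fix_orthogonal (h2 : (2 : K) ≠ 0) (hB : B.IsSymm)
    {W : Submodule K V} {v w : V} (hvW : v ∈ W) (hwW : w ∈ W) (hv : B v v = 0) (hw : B w w = 0)
    (hv_ne : ∃ x ∈ W, B v x ≠ 0) (hw_ne : ∃ x ∈ W, B w x ≠ 0) :
    ∃ s : V →ₗ[K] V, B.IsOrthogonal s ∧ s v = w ∧ ∀ z ∈ B.orthogonal W, s z = z := by
  by_cases hvw : B v w = 0
  · obtain ⟨u, huW, hu, hvu, hwu⟩ :=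
      exists_isotropic_mem_apply_ne_zero h2 hB hvW hv hvw hv_ne hw_ne
    have huw : B u w ≠ 0 := by rwa [hB.eq u w]
    refine ⟨isotropicSwap B u w ∘ₗ isotropicSwap B v u, fun x y => ?_, ?_, fun z hz => ?_⟩
    · exact (isOrthogonal_isotropicSwap hB hu hw huw _ _).trans
        (isOrthogonal_isotropicSwap hB hv hu hvu x y)
    · rw [LinearMap.comp_apply, isotropicSwap_apply_left hB hv hvu,
        isotropicSwap_apply_left hB hu huw]
    · rw [LinearMap.comp_apply, isotropicSwap_apply_of_apply_eq_zero (hz v hvW) (hz u huW),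
        isotropicSwap_apply_of_apply_eq_zero (hz u huW) (hz w hwW)]
  · exact ⟨isotropicSwap B v w, isOrthogonal_isotropicSwap hB hv hw hvw,
      isotropicSwap_apply_left hB hv hvw,
      fun z hz => isotropicSwap_apply_of_apply_eq_zero (hz v hvW) (hz w hwW)⟩

end IsotropicVectors

section BilinForm

variable {R M : Type*} [CommRing R] [AddCommGroup M] [Module R M] {B : LinearMap.BilinForm R M}

theorem mem_orthogonal_span_iff {S : Set M} {x : M} :
    x ∈ B.orthogonal (Submodule.span R S) ↔ ∀ y ∈ S, B y x = 0 :=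
  ⟨fun hx y hy => hx y (Submodule.subset_span hy),
    fun hx => show Submodule.span R S ≤ LinearMap.ker (B.flip x) from Submodule.span_le.2 hx⟩

theorem injective_of_isOrthogonal (hB : B.Nondegenerate) {g : M →ₗ[R] M} (hg : B.IsOrthogonal g) :
    Function.Injective g := by
  refine (injective_iff_map_eq_zero g).2 fun x hx => hB.1 x fun y => ?_
  rw [← hg x y, hx, map_zero, LinearMap.zero_apply]

end BilinForm

section Witt

variable {K V ι : Type*} [Field K] [AddCommGroup V] [Module K V] [FiniteDimensional K V]
  {B : LinearMap.BilinForm K V}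

theorem exists_forall_apply_eq_of_linearIndependent (hB : B.Nondegenerate) {e : ι → V}
    (he : LinearIndependent K e) (a : ι → K) : ∃ x, ∀ i, B x (e i) = a i := by
  obtain ⟨coords, hcoords⟩ := LinearMap.exists_leftInverse_of_injective
    (Finsupp.linearCombination K e) (LinearMap.ker_eq_bot.2 he)
  have coords_e (i : ι) : coords (e i) = Finsupp.single i 1 := by
    simpa using LinearMap.congr_fun hcoords (Finsupp.single i 1)
  refine ⟨(B.toDual hB).symm (Finsupp.linearCombination K a ∘ₗ coords), fun i => ?_⟩
  simp [coords_e]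

theorem exists_mem_orthogonal_span_image_apply_ne_zero (hsymm : B.IsSymm) (hB : B.Nondegenerate)
    {e : ι → V} (he : LinearIndependent K e) {s : Set ι} {k : ι} (hk : k ∉ s) :
    ∃ x ∈ B.orthogonal (Submodule.span K (e '' s)), B (e k) x ≠ 0 := by
  classical
  obtain ⟨x, hx⟩ := exists_forall_apply_eq_of_linearIndependent hB he (Pi.single k 1)
  refine ⟨x, mem_orthogonal_span_iff.2 ?_, by simp [hsymm.eq (e k) x, hx]⟩
  rintro _ ⟨i, hi, rfl⟩
  have hik : i ≠ k := ne_of_mem_of_not_mem hi hk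
  rw [hsymm.eq, hx, Pi.single_eq_of_ne hik]

theorem exists_isOrthogonal_apply_eq_of_isotropic_of_finset (h2 : (2 : K) ≠ 0) (hsymm : B.IsSymm)
    (hB : B.Nondegenerate) {e b : ι → V} (he : LinearIndependent K e) (hb : LinearIndependent K b)
    (he_iso : ∀ i j, B (e i) (e j) = 0) (hb_iso : ∀ i j, B (b i) (b j) = 0) (s : Finset ι) :
    ∃ g : V →ₗ[K] V, B.IsOrthogonal g ∧ ∀ i ∈ s, g (e i) = b i := by
  classical
  induction s using Finset.induction_on with
  | empty => exact ⟨LinearMap.id, fun _ _ => rfl, by simp⟩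
  | insert k s hk ih =>
    obtain ⟨g, hg, hge⟩ := ih
    let U := Submodule.span K (b '' s)
    have ge_linearIndependent : LinearIndependent K (g ∘ e) :=
      he.map' g (LinearMap.ker_eq_bot.2 (injective_of_isOrthogonal hB hg))
    have exists_ne_zero : ∃ x ∈ B.orthogonal U, B (g (e k)) x ≠ 0 := by
      have image_eq : (g ∘ e) '' s = b '' s := Set.image_congr hge
      rw [show U = Submodule.span K ((g ∘ e) '' s) by rw [image_eq]]
      exact exists_mem_orthogonal_span_image_apply_ne_zero hsymm hB ge_linearIndependent hk
    have gek_mem : g (e k) ∈ B.orthogonal U := by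
      refine mem_orthogonal_span_iff.2 ?_
      rintro _ ⟨i, hi, rfl⟩
      rw [← hge i hi, hg, he_iso]
    have bk_mem : b k ∈ B.orthogonal U := by
      refine mem_orthogonal_span_iff.2 ?_
      rintro _ ⟨i, -, rfl⟩
      exact hb_iso i k
    obtain ⟨t, ht, htk, ht_fix⟩ := exists_isOrthogonal_apply_eq_and_fix_orthogonal h2 hsymm
      gek_mem bk_mem (by rw [hg, he_iso]) (hb_iso k k) exists_ne_zero
      (exists_mem_orthogonal_span_image_apply_ne_zero hsymm hB hb hk)
    refine ⟨t ∘ₗ g, fun x y => (ht _ _).trans (hg x y), fun i hi => ?_⟩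
    obtain rfl | his := Finset.mem_insert.1 hi
    · exact htk
    · have bi_mem : b i ∈ U := Submodule.subset_span ⟨i, his, rfl⟩
      rw [LinearMap.comp_apply, hge i his]
      exact ht_fix _ (B.le_orthogonal_orthogonal hsymm.isRefl bi_mem)

theorem exists_isOrthogonal_apply_eq_of_isotropic [Finite ι] (h2 : (2 : K) ≠ 0) (hsymm : B.IsSymm)
    (hB : B.Nondegenerate) {e b : ι → V} (he : LinearIndependent K e) (hb : LinearIndependent K b)
    (he_iso : ∀ i j, B (e i) (e j) = 0) (hb_iso : ∀ i j, B (b i) (b j) = 0) :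
    ∃ g : V →ₗ[K] V, B.IsOrthogonal g ∧ ∀ i, g (e i) = b i := by
  cases nonempty_fintype ι
  simpa using exists_isOrthogonal_apply_eq_of_isotropic_of_finset h2 hsymm hB he hb he_iso hb_iso
    Finset.univ

theorem two_mul_card_le_finrank_of_isotropic [Fintype ι] (hB : B.Nondegenerate) {e : ι → V}
    (he : LinearIndependent K e) (he_iso : ∀ i j, B (e i) (e j) = 0) :
    2 * Fintype.card ι ≤ finrank K V := by
  let W := Submodule.span K (Set.range e)
  have le_orthogonal : W ≤ B.orthogonal W := by
    refine Submodule.span_le.2 ?_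
    rintro _ ⟨j, rfl⟩
    refine mem_orthogonal_span_iff.2 ?_
    rintro _ ⟨i, rfl⟩
    exact he_iso i j
  have finrank_W : finrank K W = Fintype.card ι := finrank_span_eq_card he
  have finrank_le := Submodule.finrank_mono le_orthogonal
  rw [LinearMap.BilinForm.finrank_orthogonal hB] at finrank_le
  have := W.finrank_le
  omega

end Witt

section Matrices

variable {K R m n κ : Type*} [Field K] [CommRing R]

theorem eq_zero_of_mul_eq_zero_of_linearIndependent_col [Fintype n] {Q : Matrix m n R}
    (hQ : LinearIndependent R Q.col) {X : Matrix n κ R} (h : Q * X = 0) : X = 0 := by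
  refine ext_col fun j => mulVec_injective_iff.2 hQ ?_
  calc Q *ᵥ X.col j = (Q * X).col j := rfl
    _ = Q *ᵥ (0 : Matrix n κ R).col j := by rw [h]; exact (mulVec_zero Q).symm

theorem eq_zero_of_mul_mul_transpose_eq_zero [Fintype n] {Q : Matrix m n R}
    (hQ : LinearIndependent R Q.col) {X : Matrix n n R} (h : Q * X * Qᵀ = 0) : X = 0 := by
  have mul_transpose_eq_zero : X * Qᵀ = 0 :=
    eq_zero_of_mul_eq_zero_of_linearIndependent_col hQ (by rwa [← Matrix.mul_assoc])
  rw [← transpose_eq_zero]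
  refine eq_zero_of_mul_eq_zero_of_linearIndependent_col hQ ?_
  rw [← transpose_eq_zero, transpose_mul, transpose_transpose, mul_transpose_eq_zero]

theorem exists_eq_mul_transpose_of_rank [Finite m] [Fintype n] (A : Matrix m n K) :
    ∃ (P : Matrix m (Fin A.rank) K) (Q : Matrix n (Fin A.rank) K),
      LinearIndependent K P.col ∧ LinearIndependent K Q.col ∧ A = P * Qᵀ := by
  let C := Submodule.span K (Set.range A.col)
  let b : Basis (Fin A.rank) K C := finBasisOfFinrankEq K C A.rank_eq_finrank_span_cols.symm
  let a (j : n) : C := ⟨A.col j, Submodule.subset_span ⟨j, rfl⟩⟩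
  let P : Matrix m (Fin A.rank) K := of fun i k => (b k : m → K) i
  let Q : Matrix n (Fin A.rank) K := of fun j k => b.repr (a j) k
  have A_eq : A = P * Qᵀ := by
    ext i j
    calc A i j = ((∑ k, b.repr (a j) k • b k : C) : m → K) i := by rw [b.sum_repr]; rfl
      _ = (P * Qᵀ) i j := by simp [-Basis.sum_repr, P, Q, mul_apply, mul_comm]
  have rank_le : A.rank ≤ Q.rank := by
    conv_lhs => rw [A_eq]
    exact (rank_mul_le_right P Qᵀ).trans_eq Q.rank_transpose
  refine ⟨P, Q, b.linearIndependent.map' C.subtype C.ker_subtype, ?_, A_eq⟩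
  rw [linearIndependent_iff_card_le_finrank_span, Fintype.card_fin]
  exact rank_le.trans_eq Q.rank_eq_finrank_span_cols

theorem exists_isotropic_rank_factorization [Fintype n] {A J : Matrix n n K}
    (hcol : Aᵀ * J * A = 0) (hrow : A * J * Aᵀ = 0) :
    ∃ (r : ℕ) (P Q : Matrix n (Fin r) K), LinearIndependent K P.col ∧
      LinearIndependent K Q.col ∧ Pᵀ * J * P = 0 ∧ Qᵀ * J * Q = 0 ∧ A = P * Qᵀ := by
  obtain ⟨P, Q, hP, hQ, hA⟩ := exists_eq_mul_transpose_of_rank A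
  refine ⟨A.rank, P, Q, hP, hQ, eq_zero_of_mul_mul_transpose_eq_zero hQ ?_,
    eq_zero_of_mul_mul_transpose_eq_zero hP ?_, hA⟩
  · simpa only [hA, transpose_mul, transpose_transpose, Matrix.mul_assoc] using hcol
  · simpa only [hA, transpose_mul, transpose_transpose, Matrix.mul_assoc] using hrow

variable [Fintype n] [DecidableEq n]

theorem toBilin'_col_col (J : Matrix n n R) (P Q : Matrix n κ R) (i j : κ) :
    J.toBilin' (P.col i) (Q.col j) = (Pᵀ * J * Q) i j := by
  rw [toBilin'_apply', Matrix.mul_assoc]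
  rfl

theorem mul_mul_transpose_eq_of_transpose_mul_mul_eq {J : Matrix n n R} (hJ : J * J = 1)
    {h : Matrix n n R} (hh : hᵀ * J * h = J) : h * J * hᵀ = J := by
  have left_inv : J * hᵀ * J * h = 1 := by rw [Matrix.mul_assoc J, Matrix.mul_assoc J, hh, hJ]
  have right_inv : h * (J * hᵀ * J) = 1 := mul_eq_one_comm.1 left_inv
  calc h * J * hᵀ = h * (J * hᵀ * J) * J := by simp only [Matrix.mul_assoc, hJ, Matrix.mul_one]
    _ = J := by rw [right_inv, Matrix.one_mul]

theorem two_mul_card_le_card_of_isotropic [Fintype κ] {J : Matrix n n K} (hJ : J.det ≠ 0)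
    {P : Matrix n κ K} (hP : LinearIndependent K P.col) (hP_iso : Pᵀ * J * P = 0) :
    2 * Fintype.card κ ≤ Fintype.card n := by
  simpa using two_mul_card_le_finrank_of_isotropic
    (LinearMap.BilinForm.nondegenerate_toBilin'_of_det_ne_zero' J hJ) hP
    (fun i j => by rw [toBilin'_col_col, hP_iso, Matrix.zero_apply])

theorem exists_transpose_mul_mul_eq_and_mul_eq_of_isotropic [Finite κ] (h2 : (2 : K) ≠ 0)
    {J : Matrix n n K} (hsymm : J.IsSymm) (hJ : J.det ≠ 0) {E P : Matrix n κ K}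
    (hE : LinearIndependent K E.col) (hP : LinearIndependent K P.col)
    (hE_iso : Eᵀ * J * E = 0) (hP_iso : Pᵀ * J * P = 0) :
    ∃ g : Matrix n n K, gᵀ * J * g = J ∧ g * E = P := by
  obtain ⟨g, hg, hgE⟩ := exists_isOrthogonal_apply_eq_of_isotropic h2
    (isSymm_toBilin'_iff_isSymm.2 hsymm)
    (LinearMap.BilinForm.nondegenerate_toBilin'_of_det_ne_zero' J hJ) hE hP
    (fun i j => by rw [toBilin'_col_col, hE_iso, Matrix.zero_apply])
    (fun i j => by rw [toBilin'_col_col, hP_iso, Matrix.zero_apply])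
  refine ⟨LinearMap.toMatrix' g, toBilin'.injective ?_, ext_col fun k => ?_⟩
  · rw [← toBilin'_comp, toLin'_toMatrix']
    exact LinearMap.ext₂ hg
  · rw [← hgE k, ← LinearMap.toMatrix'_mulVec]
    rfl

end Matrices

section OrthogonalMonoid

variable {K : Type*} [Field K] {n r : ℕ}

theorem Jorth_eq_permMatrix : Jorth K n = (Fin.revPerm (n := n)).permMatrix K := by
  ext i j
  have add_eq_iff : (i : ℕ) + j + 1 = n ↔ i.rev = j := by
    rw [Fin.ext_iff, Fin.val_rev]
    omega
  simp [Jorth, Equiv.toPEquiv_apply, add_eq_iff]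

theorem isSymm_Jorth : (Jorth K n).IsSymm := by
  rw [IsSymm, Jorth_eq_permMatrix, transpose_permMatrix]
  rfl

theorem Jorth_mul_self : Jorth K n * Jorth K n = 1 := by
  rw [Jorth_eq_permMatrix, ← permMatrix_mul]
  have revPerm_mul_self : (Fin.revPerm (n := n)) * Fin.revPerm = 1 := Equiv.ext Fin.rev_rev
  rw [revPerm_mul_self, permMatrix_one]

theorem det_Jorth_ne_zero : (Jorth K n).det ≠ 0 :=
  det_ne_zero_of_left_inverse Jorth_mul_self

/-- The group `GO_n(K)` of orthogonal similitudes, as a set of matrices. -/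
def orthogonalSimilitudes (K : Type*) [Field K] (n : ℕ) : Set (Matrix (Fin n) (Fin n) K) :=
  {g | ∃ c : K, c ≠ 0 ∧ gᵀ * Jorth K n * g = c • Jorth K n}

/-- The orthogonal monoid `S_O(n, K)`, as a set of matrices. -/
def orthogonalMonoid (K : Type*) [Field K] (n : ℕ) : Set (Matrix (Fin n) (Fin n) K) :=
  {A | ∃ c : K, Aᵀ * Jorth K n * A = c • Jorth K n ∧ A * Jorth K n * Aᵀ = c • Jorth K n}

/-- The `n × r` matrix whose columns are the first `r` standard basis vectors: for `2 * r ≤ n`,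
the model totally isotropic frame to which the others are compared. -/
def coordinateFrame (K : Type*) [Field K] (hr : r ≤ n) : Matrix (Fin n) (Fin r) K :=
  (1 : Matrix (Fin n) (Fin n) K).submatrix id (Fin.castLE hr)

theorem linearIndependent_col_coordinateFrame (hr : r ≤ n) :
    LinearIndependent K (coordinateFrame K hr).col :=
  (linearIndependent_cols_of_isUnit isUnit_one).comp _ (Fin.castLE_injective hr)

theorem coordinateFrame_mul_transpose (hr : r ≤ n) :
    coordinateFrame K hr * (coordinateFrame K hr)ᵀ =
      diagonal fun i : Fin n => if (i : ℕ) < r then 1 else 0 := by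
  ext i j
  by_cases hi : (i : ℕ) < r
  · obtain ⟨k, rfl⟩ : ∃ k : Fin r, Fin.castLE hr k = i := ⟨⟨i, hi⟩, rfl⟩
    rw [mul_apply, Finset.sum_eq_single k]
    · simp [coordinateFrame, one_apply, diagonal_apply, eq_comm]
    · intro l _ hlk
      simp [coordinateFrame, one_apply, hlk.symm]
    · simp
  · have ne_castLE (k : Fin r) : i ≠ Fin.castLE hr k := fun h => hi (h ▸ k.isLt)
    simp [coordinateFrame, mul_apply, diagonal_apply, hi, ne_castLE]

theorem coordinateFrame_isotropic (hr : r ≤ n) (h2r : 2 * r ≤ n) :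
    (coordinateFrame K hr)ᵀ * Jorth K n * coordinateFrame K hr = 0 := by
  have submatrix_eq : (coordinateFrame K hr)ᵀ * Jorth K n * coordinateFrame K hr =
      (Jorth K n).submatrix (Fin.castLE hr) (Fin.castLE hr) := by
    ext i j
    simp [coordinateFrame, mul_apply, one_apply]
  ext i j
  have add_ne : (i : ℕ) + j + 1 ≠ n := by omega
  rw [submatrix_eq]
  simp [Jorth, add_ne]

theorem mem_orthogonalSimilitudes_of_transpose_mul_mul_eq {g : Matrix (Fin n) (Fin n) K}
    (hg : gᵀ * Jorth K n * g = Jorth K n) : g ∈ orthogonalSimilitudes K n :=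
  ⟨1, one_ne_zero, by rw [hg, one_smul]⟩

theorem coordinateFrame_mul_transpose_mem_orthogonalMonoid (hr : r ≤ n) (h2r : 2 * r ≤ n) :
    coordinateFrame K hr * (coordinateFrame K hr)ᵀ ∈ orthogonalMonoid K n := by
  set E := coordinateFrame K hr
  have sandwich_eq_zero : E * Eᵀ * Jorth K n * (E * Eᵀ) = 0 := by
    calc E * Eᵀ * Jorth K n * (E * Eᵀ) = E * (Eᵀ * Jorth K n * E) * Eᵀ := by
          simp only [Matrix.mul_assoc]
      _ = 0 := by rw [coordinateFrame_isotropic hr h2r, Matrix.mul_zero, Matrix.zero_mul]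
  refine ⟨0, ?_, ?_⟩ <;>
    rwa [transpose_mul, transpose_transpose, zero_smul]

theorem exists_eq_mul_diagonal_mul_of_isotropic (h2 : (2 : K) ≠ 0) {A : Matrix (Fin n) (Fin n) K}
    (hcol : Aᵀ * Jorth K n * A = 0) (hrow : A * Jorth K n * Aᵀ = 0) :
    ∃ g ∈ orthogonalSimilitudes K n, ∃ h ∈ orthogonalSimilitudes K n, ∃ d : Fin n → K,
      (∀ i, d i = 0 ∨ d i = 1) ∧ diagonal d ∈ orthogonalMonoid K n ∧ A = g * diagonal d * h := by
  obtain ⟨r, P, Q, hP, hQ, hP_iso, hQ_iso, rfl⟩ := exists_isotropic_rank_factorization hcol hrow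
  have h2r : 2 * r ≤ n := by
    simpa using two_mul_card_le_card_of_isotropic det_Jorth_ne_zero hP hP_iso
  have hr : r ≤ n := by omega
  have hE := linearIndependent_col_coordinateFrame (K := K) hr
  have hE_iso := coordinateFrame_isotropic (K := K) hr h2r
  obtain ⟨g, hg, hgE⟩ := exists_transpose_mul_mul_eq_and_mul_eq_of_isotropic h2 isSymm_Jorth
    det_Jorth_ne_zero hE hP hE_iso hP_iso
  obtain ⟨h, hh, hhE⟩ := exists_transpose_mul_mul_eq_and_mul_eq_of_isotropic h2 isSymm_Jorth
    det_Jorth_ne_zero hE hQ hE_iso hQ_iso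
  have hh_transpose : hᵀ ∈ orthogonalSimilitudes K n :=
    mem_orthogonalSimilitudes_of_transpose_mul_mul_eq
      (mul_mul_transpose_eq_of_transpose_mul_mul_eq Jorth_mul_self hh)
  refine ⟨g, mem_orthogonalSimilitudes_of_transpose_mul_mul_eq hg, hᵀ, hh_transpose, _,
    fun i => (ite_eq_or_eq ((i : ℕ) < r) 1 0).symm, ?_, ?_⟩
  · rw [← coordinateFrame_mul_transpose hr]
    exact coordinateFrame_mul_transpose_mem_orthogonalMonoid hr h2r
  · rw [← coordinateFrame_mul_transpose hr, ← hgE, ← hhE, transpose_mul]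
    simp only [Matrix.mul_assoc]

theorem orthogonal_monoid_orbit_decomposition_general (h2 : (2 : K) ≠ 0)
    {A : Matrix (Fin n) (Fin n) K} (hA : A ∈ orthogonalMonoid K n) :
    ∃ g ∈ orthogonalSimilitudes K n, ∃ h ∈ orthogonalSimilitudes K n, ∃ d : Fin n → K,
      (∀ i, d i = 0 ∨ d i = 1) ∧ diagonal d ∈ orthogonalMonoid K n ∧ A = g * diagonal d * h := by
  obtain ⟨c, hcol, hrow⟩ := hA
  obtain rfl | hc := eq_or_ne c 0
  · rw [zero_smul] at hcol hrow
    exact exists_eq_mul_diagonal_mul_of_isotropic h2 hcol hrow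
  · exact ⟨A, ⟨c, hc, hcol⟩, 1, ⟨1, one_ne_zero, by simp⟩, 1, fun _ => Or.inr rfl,
      ⟨1, by simp, by simp⟩, by simp⟩

end OrthogonalMonoid

/-- over an algebraically closed field of characteristic `≠ 2`,
every matrix `A` in the orthogonal monoid `S_O(n,K)` can be written
`A = g * e * h` with `g, h ∈ GOₙ(K)` and `e` a diagonal idempotent (all
diagonal entries `0` or `1`) which also lies in `S_O(n,K)`. -/
theorem orthogonal_monoid_orbit_decomposition (K : Type*) [Field K]
    [IsAlgClosed K] (h2 : (2 : K) ≠ 0) (n : ℕ) (hn : 1 ≤ n)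
    (A : Matrix (Fin n) (Fin n) K)
    (hA : ∃ c : K, Aᵀ * Jorth K n * A = c • Jorth K n ∧
        A * Jorth K n * Aᵀ = c • Jorth K n) :
    ∃ g h e : Matrix (Fin n) (Fin n) K,
      (∃ c : K, c ≠ 0 ∧ gᵀ * Jorth K n * g = c • Jorth K n) ∧
      (∃ c : K, c ≠ 0 ∧ hᵀ * Jorth K n * h = c • Jorth K n) ∧
      (∃ d : Fin n → K, e = Matrix.diagonal d ∧ ∀ i, d i = 0 ∨ d i = 1) ∧
      (∃ c : K, eᵀ * Jorth K n * e = c • Jorth K n ∧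
          e * Jorth K n * eᵀ = c • Jorth K n) ∧
      A = g * e * h := by
  obtain ⟨g, hg, h, hh, d, hd, he, hA_eq⟩ := orthogonal_monoid_orbit_decomposition_general h2 hA
  exact ⟨g, h, diagonal d, hg, hh, ⟨d, rfl, hd⟩, he, hA_eq⟩
end
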